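/- Let k be a field of characteristic different from 2 and let L be a finite-dimensional simple Lie algebra over k that is generated by its pure extremal elements. Then for every inner ideal I of L with I ≠ L one has ⁅I, I⁆ = 0, and moreover every nonzero element x of I is ad-nilpotent of index exactly 3, i.e. (ad_x)³ = 0 and (ad_x)² ≠ 0. -/

import Mathlib

/-- A `k`-subspace `I` of a Lie algebra `L` is an inner ideal if
`⁅x, ⁅y, z⁆⁆ ∈ I` for all `x, y ∈ I` and `z ∈ L`. -/
def IsInnerIdeal (k : Type*) {L : Type*} [Field k] [LieRing L] [LieAlgebra k L]
    (I : Submodule k L) : Prop :=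
  ∀ x ∈ I, ∀ y ∈ I, ∀ z : L, ⁅x, ⁅y, z⁆⁆ ∈ I

/-- `x` is extremal: `x ≠ 0` and `⁅x, ⁅x, z⁆⁆ ∈ k·x` for all `z`. -/
def IsExtremal (k : Type*) {L : Type*} [Field k] [LieRing L] [LieAlgebra k L] (x : L) : Prop :=
  x ≠ 0 ∧ ∀ z : L, ⁅x, ⁅x, z⁆⁆ ∈ Submodule.span k ({x} : Set L)

/-- `x` is a sandwich: `⁅x, ⁅x, z⁆⁆ = 0` for all `z`. -/
def IsSandwich {L : Type*} [LieRing L] (x : L) : Prop :=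
  ∀ z : L, ⁅x, ⁅x, z⁆⁆ = 0

/-- `x` is pure extremal: extremal but not a sandwich. -/
def IsPureExtremal (k : Type*) {L : Type*} [Field k] [LieRing L] [LieAlgebra k L] (x : L) : Prop :=
  IsExtremal k x ∧ ¬ IsSandwich x

/-! For an extremal element `x` write `⁅x, ⁅x, z⁆⁆ = 2 g_x(z) x`; the form `g_x(y)` is symmetric on
extremal elements. Each `exp (ad x)` is an automorphism, so it permutes the pure extremal elements
and preserves the radical of `g`. As the pure extremal elements generate `L`, the radical is an
ideal; it is proper, hence zero.

Let `I` be an inner ideal and `J = {d | ⁅L, d⁆ ⊆ I}`, which contains `⁅I, I⁆`. If `J ≠ 0`, then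
nondegeneracy of `g` produces a pure extremal element in `J`, and the span of all such elements is
an ideal contained in `I`, again because the exponentials preserve it; so `I = L`. For `I` proper
this gives `J = 0`, hence `⁅I, I⁆ = 0`. For `x ∈ I`, the map `(ad x)³` takes `L` into `⁅I, I⁆ = 0`,
while `(ad x)² = 0` with `x ≠ 0` would make `x` an extremal element in the radical of `g`. -/

section LieSpan

variable {R L M : Type*} [CommRing R] [LieRing L] [LieAlgebra R L]
  [AddCommGroup M] [Module R M] [LieRingModule L M] [LieModule R L M] {S : Set L}

theorem lie_mem_of_lieSpan_eq_top (hS : LieSubalgebra.lieSpan R L S = ⊤) {N : Submodule R M}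
    (hN : ∀ x ∈ S, ∀ m ∈ N, ⁅x, m⁆ ∈ N) (x : L) {m : M} (hm : m ∈ N) : ⁅x, m⁆ ∈ N := by
  have hx : x ∈ LieSubalgebra.lieSpan R L S := hS ▸ LieSubalgebra.mem_top x
  induction hx using LieSubalgebra.lieSpan_induction generalizing m with
  | mem x hx => exact hN x hx m hm
  | zero => simp only [zero_lie, zero_mem]
  | smul c x _ hx => rw [smul_lie]; exact N.smul_mem c (hx hm)
  | add x y _ _ hx hy => rw [add_lie]; exact N.add_mem (hx hm) (hy hm)
  | lie x y _ _ hx hy => rw [lie_lie]; exact N.sub_mem (hx (hy hm)) (hy (hx hm))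

theorem eq_bot_or_eq_top_of_lieSpan_eq_top [LieAlgebra.IsSimple R L]
    (hS : LieSubalgebra.lieSpan R L S = ⊤) {N : Submodule R L}
    (hN : ∀ x ∈ S, ∀ y ∈ N, ⁅x, y⁆ ∈ N) : N = ⊥ ∨ N = ⊤ := by
  let K : LieIdeal R L :=
    { N with lie_mem := fun {x _} hm => lie_mem_of_lieSpan_eq_top hS hN x hm }
  exact (LieAlgebra.IsSimple.eq_bot_or_eq_top K).imp
    (congrArg LieSubmodule.toSubmodule) (congrArg LieSubmodule.toSubmodule)

end LieSpan

section ExtremalForm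

variable {k L : Type*} [Field k] [LieRing L] [LieAlgebra k L] {x y : L}

/-- The extremal form `g_x` of an extremal element `x`, in the normalization
`⁅x, ⁅x, z⁆⁆ = 2 g_x(z) x`; it is `0` in characteristic two, where `2⁻¹ = 0`. -/
noncomputable def IsExtremal.form (hx : IsExtremal k x) : Module.Dual k L :=
  (2⁻¹ : k) • (LinearEquiv.coord k L x hx.1).toLinearMap ∘ₗ
    (LieAlgebra.ad k L x ∘ₗ LieAlgebra.ad k L x).codRestrict (Submodule.span k {x}) hx.2

variable [NeZero (2 : k)]

theorem IsExtremal.lie_lie_eq (hx : IsExtremal k x) (z : L) :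
    ⁅x, ⁅x, z⁆⁆ = (2 * hx.form z) • x := by
  have hform : 2 * hx.form z = LinearEquiv.coord k L x hx.1 ⟨⁅x, ⁅x, z⁆⁆, hx.2 z⟩ :=
    mul_inv_cancel_left₀ two_ne_zero _
  rw [hform, LinearEquiv.coord_apply_smul]

theorem IsExtremal.form_eq_zero_iff (hx : IsExtremal k x) {z : L} :
    hx.form z = 0 ↔ ⁅x, ⁅x, z⁆⁆ = 0 := by
  rw [hx.lie_lie_eq, smul_eq_zero_iff_left hx.1, mul_eq_zero_iff_left two_ne_zero]

theorem IsExtremal.form_self (hx : IsExtremal k x) : hx.form x = 0 := by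
  rw [hx.form_eq_zero_iff, lie_self, lie_zero]

theorem IsExtremal.form_lie_self (hx : IsExtremal k x) (z : L) : hx.form ⁅x, z⁆ = 0 := by
  rw [hx.form_eq_zero_iff, hx.lie_lie_eq z, lie_smul, lie_self, smul_zero]

theorem IsExtremal.form_comm (hx : IsExtremal k x) (hy : IsExtremal k y) :
    hx.form y = hy.form x := by
  by_cases hxy : ⁅x, y⁆ = 0
  · rw [hx.form_eq_zero_iff.2 (by rw [hxy, lie_zero]),
      hy.form_eq_zero_iff.2 (by rw [← lie_skew y x, hxy, neg_zero, lie_zero])]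
  have hjacobi : ⁅x, ⁅y, ⁅x, y⁆⁆⁆ = ⁅y, ⁅x, ⁅x, y⁆⁆⁆ := by
    rw [leibniz_lie, lie_self, zero_add]
  have hyxy : ⁅y, ⁅x, y⁆⁆ = -((2 * hy.form x) • y) := by
    rw [← hy.lie_lie_eq, ← lie_skew x y, lie_neg]
  rw [hx.lie_lie_eq, hyxy, lie_neg, lie_smul, lie_smul, ← lie_skew y x, smul_neg, neg_inj]
    at hjacobi
  exact (mul_left_cancel₀ two_ne_zero (smul_left_injective k hxy hjacobi)).symm

theorem IsExtremal.bracket_lie_lie_eq (hx : IsExtremal k x) (y z : L) :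
    ⁅⁅x, y⁆, ⁅x, z⁆⁆ = hx.form ⁅y, z⁆ • x + hx.form z • ⁅x, y⁆ - hx.form y • ⁅x, z⁆ := by
  -- Expand `⁅x, ⁅x, ⁅y, z⁆⁆⁆` by the Leibniz rule and divide by two.
  have h := hx.lie_lie_eq ⁅y, z⁆
  rw [leibniz_lie x y z, lie_add, leibniz_lie x ⁅x, y⁆ z, leibniz_lie x y ⁅x, z⁆, hx.lie_lie_eq,
    hx.lie_lie_eq, smul_lie, lie_smul, ← lie_skew y x] at h
  refine smul_right_injective L (two_ne_zero (α := k)) ?_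
  linear_combination (norm := module) h

/-- Premet's identity. -/
theorem IsExtremal.lie_lie_lie_eq (hx : IsExtremal k x) (y z : L) :
    ⁅x, ⁅y, ⁅x, z⁆⁆⁆ = hx.form ⁅y, z⁆ • x - hx.form z • ⁅x, y⁆ - hx.form y • ⁅x, z⁆ := by
  rw [leibniz_lie x y, hx.bracket_lie_lie_eq, hx.lie_lie_eq, lie_smul, ← lie_skew y x]
  module

/-- The automorphism `exp (ad x)` of an extremal element `x`. Since `(ad x)³ = 0` and
`(ad x)² z = 2 g_x(z) x`, the exponential series is `z + ⁅x, z⁆ + g_x(z) x`. -/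
noncomputable def IsExtremal.exp (hx : IsExtremal k x) : L ≃ₗ⁅k⁆ L where
  toFun z := z + ⁅x, z⁆ + hx.form z • x
  invFun z := z - ⁅x, z⁆ + hx.form z • x
  map_add' z w := by
    simp only [lie_add, map_add]
    module
  map_smul' c z := by
    simp only [lie_smul, map_smul, smul_eq_mul, RingHom.id_apply]
    module
  map_lie' {z w} := by
    simp only [add_lie, lie_add, smul_lie, lie_smul, lie_self, hx.bracket_lie_lie_eq,
      hx.lie_lie_eq]
    rw [← lie_skew ⁅x, z⁆ x, hx.lie_lie_eq, leibniz_lie x z w, ← lie_skew z x]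
    module
  left_inv z := by
    simp only [lie_add, lie_smul, lie_self, map_add, map_smul, hx.lie_lie_eq, hx.form_lie_self,
      hx.form_self, smul_eq_mul]
    module
  right_inv z := by
    simp only [lie_add, lie_sub, lie_smul, lie_self, map_add, map_sub, map_smul, hx.lie_lie_eq,
      hx.form_lie_self, hx.form_self, smul_eq_mul]
    module

theorem IsExtremal.exp_apply (hx : IsExtremal k x) (z : L) :
    hx.exp z = z + ⁅x, z⁆ + hx.form z • x :=
  rfl

end ExtremalForm

section LieEquiv

variable {R L L' : Type*} [CommRing R] [LieRing L] [LieAlgebra R L] [LieRing L'] [LieAlgebra R L']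

theorem lie_lie_map_eq (φ : L ≃ₗ⁅R⁆ L') (x : L) (z : L') :
    ⁅φ x, ⁅φ x, z⁆⁆ = φ ⁅x, ⁅x, φ.symm z⁆⁆ := by
  rw [LieEquiv.map_lie, LieEquiv.map_lie, φ.apply_symm_apply]

theorem IsSandwich.map {x : L} (hx : IsSandwich x) (φ : L ≃ₗ⁅R⁆ L') :
    IsSandwich (φ x) := fun z => by
  rw [lie_lie_map_eq, hx, map_zero]

end LieEquiv

section ExtremalRadical

variable {k L L' : Type*} [Field k] [LieRing L] [LieAlgebra k L] [LieRing L'] [LieAlgebra k L']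
  {x y : L}

theorem IsExtremal.map (hx : IsExtremal k x) (φ : L ≃ₗ⁅k⁆ L') : IsExtremal k (φ x) := by
  refine ⟨(map_ne_zero_iff φ φ.injective).2 hx.1, fun z => ?_⟩
  obtain ⟨c, hc⟩ := Submodule.mem_span_singleton.1 (hx.2 (φ.symm z))
  exact Submodule.mem_span_singleton.2
    ⟨c, by rw [lie_lie_map_eq, ← hc, map_smul]⟩

theorem IsPureExtremal.map (hx : IsPureExtremal k x) (φ : L ≃ₗ⁅k⁆ L') :
    IsPureExtremal k (φ x) :=
  ⟨hx.1.map φ, fun h => hx.2 <| by simpa only [φ.symm_apply_apply] using h.map φ.symm⟩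

variable (k L) in
/-- The radical of the extremal form: the common kernel of the functionals `g_e`, for `e` pure
extremal. -/
def extremalRadical : Submodule k L where
  carrier := {x | ∀ e : L, IsPureExtremal k e → ⁅e, ⁅e, x⁆⁆ = 0}
  zero_mem' e _ := by simp only [lie_zero]
  add_mem' hx hy e he := by rw [lie_add, lie_add, hx e he, hy e he, add_zero]
  smul_mem' c x hx e he := by rw [lie_smul, lie_smul, hx e he, smul_zero]

theorem map_mem_extremalRadical (hx : x ∈ extremalRadical k L) (φ : L ≃ₗ⁅k⁆ L') :
    φ x ∈ extremalRadical k L' := fun e he => by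
  rw [← φ.apply_symm_apply e, lie_lie_map_eq, φ.symm_apply_apply, hx _ (he.map φ.symm),
    map_zero]

variable [NeZero (2 : k)]

theorem lie_mem_extremalRadical (hy : IsPureExtremal k y) (hx : x ∈ extremalRadical k L) :
    ⁅y, x⁆ ∈ extremalRadical k L := by
  have hexp : hy.1.exp x = x + ⁅y, x⁆ := by
    rw [hy.1.exp_apply, hy.1.form_eq_zero_iff.2 (hx y hy), zero_smul, add_zero]
  exact (Submodule.add_mem_iff_right _ hx).1 (hexp ▸ map_mem_extremalRadical hx hy.1.exp)

variable [LieAlgebra.IsSimple k L]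
  (hgen : LieSubalgebra.lieSpan k L {x : L | IsPureExtremal k x} = ⊤)

include hgen

theorem extremalRadical_eq_bot : extremalRadical k L = ⊥ := by
  refine (eq_bot_or_eq_top_of_lieSpan_eq_top hgen
    fun y hy x hx => lie_mem_extremalRadical hy hx).resolve_right fun htop => ?_
  have hempty : {x : L | IsPureExtremal k x} = ∅ :=
    Set.eq_empty_of_forall_notMem fun e he =>
      he.2 fun z => (htop ▸ Submodule.mem_top : z ∈ extremalRadical k L) e he
  have := LieAlgebra.IsSimple.nontrivial k L
  obtain ⟨d, hd⟩ := exists_ne (0 : L)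
  have hd_span : d ∈ LieSubalgebra.lieSpan k L {x : L | IsPureExtremal k x} :=
    hgen ▸ LieSubalgebra.mem_top d
  rw [hempty, LieSubalgebra.span_empty] at hd_span
  exact hd ((LieSubalgebra.mem_bot d).1 hd_span)

theorem exists_isPureExtremal_form_ne_zero (hx : x ≠ 0) :
    ∃ (e : L) (he : IsPureExtremal k e), he.1.form x ≠ 0 := by
  have hrad : x ∉ extremalRadical k L := by
    rwa [extremalRadical_eq_bot hgen, Submodule.mem_bot]
  by_contra! h
  exact hrad fun e he => he.1.form_eq_zero_iff.1 (h e he)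

theorem IsSandwich.eq_zero (hx : IsSandwich x) : x = 0 := by
  by_contra hx0
  have hxe : IsExtremal k x := ⟨hx0, fun z => hx z ▸ zero_mem _⟩
  obtain ⟨e, he, hne⟩ := exists_isPureExtremal_form_ne_zero hgen hx0
  exact hne (by rw [he.1.form_comm hxe, hxe.form_eq_zero_iff, hx e])

end ExtremalRadical

section LieTransporter

variable {R L M : Type*} [CommRing R] [LieRing L] [LieAlgebra R L]
  [AddCommGroup M] [Module R M] [LieRingModule L M] [LieModule R L M]

variable (L) in
/-- The transporter of `L` into a subspace `I`: the elements `d` with `⁅L, d⁆ ⊆ I`. For a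
Lie submodule this is `LieSubmodule.normalizer`. -/
def lieTransporter (I : Submodule R M) : Submodule R M where
  carrier := {d | ∀ z : L, ⁅z, d⁆ ∈ I}
  zero_mem' z := by simp only [lie_zero, zero_mem]
  add_mem' ha hb z := by rw [lie_add]; exact I.add_mem (ha z) (hb z)
  smul_mem' c a ha z := by rw [lie_smul]; exact I.smul_mem c (ha z)

end LieTransporter

namespace IsInnerIdeal

variable {k L : Type*} [Field k] [LieRing L] [LieAlgebra k L] {I : Submodule k L}
  {x y d e : L}

theorem lie_mem_lieTransporter (hI : IsInnerIdeal k I) (hx : x ∈ I) (hy : y ∈ I) :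
    ⁅x, y⁆ ∈ lieTransporter L I := fun z => by
  rw [← lie_skew, lie_lie]
  exact I.neg_mem (I.sub_mem (hI x hx y hy z) (hI y hy x hx z))

variable [NeZero (2 : k)]

theorem mem_inf_lieTransporter_of_form_ne_zero (hI : IsInnerIdeal k I)
    (hd : d ∈ lieTransporter L I) (he : IsExtremal k e) (hne : he.form d ≠ 0) :
    e ∈ I ⊓ lieTransporter L I := by
  have hc : 2 * he.form d ≠ 0 := mul_ne_zero two_ne_zero hne
  have hede : ⁅⁅e, d⁆, e⁆ = -((2 * he.form d) • e) := by rw [← lie_skew, he.lie_lie_eq]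
  have heI : e ∈ I := by
    have h := hI _ (hd e) _ (hd e) e
    rwa [hede, lie_neg, lie_smul, hede, smul_neg, neg_neg, I.smul_mem_iff hc,
      I.smul_mem_iff hc] at h
  have heJ := hI.lie_mem_lieTransporter heI (hd e)
  rw [he.lie_lie_eq, Submodule.smul_mem_iff _ hc] at heJ
  exact ⟨heI, heJ⟩

theorem form_smul_mem_lieTransporter (hI : IsInnerIdeal k I) (hd : d ∈ lieTransporter L I)
    (he : IsExtremal k e) : he.form d • e ∈ lieTransporter L I := by
  by_cases h : he.form d = 0
  · rw [h, zero_smul]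
    exact zero_mem _
  · exact Submodule.smul_mem _ _ (hI.mem_inf_lieTransporter_of_form_ne_zero hd he h).2

variable [LieAlgebra.IsSimple k L]
  (hgen : LieSubalgebra.lieSpan k L {x : L | IsPureExtremal k x} = ⊤)

include hgen

theorem exists_mem_inf_lieTransporter_form_ne_zero (hI : IsInnerIdeal k I)
    (he : IsExtremal k e) (heJ : e ∈ lieTransporter L I) :
    ∃ f ∈ I ⊓ lieTransporter L I, he.form f ≠ 0 := by
  obtain ⟨f, hf, hne⟩ := exists_isPureExtremal_form_ne_zero hgen he.1
  exact ⟨f, hI.mem_inf_lieTransporter_of_form_ne_zero heJ hf.1 hne, he.form_comm hf.1 ▸ hne⟩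

theorem mem_of_mem_lieTransporter (hI : IsInnerIdeal k I) (he : IsExtremal k e)
    (heJ : e ∈ lieTransporter L I) : e ∈ I := by
  obtain ⟨f, hf, hne⟩ := hI.exists_mem_inf_lieTransporter_form_ne_zero hgen he heJ
  exact (hI.mem_inf_lieTransporter_of_form_ne_zero hf.2 he hne).1

theorem lie_mem_lieTransporter_of_isExtremal (hI : IsInnerIdeal k I) (he : IsExtremal k e)
    (heJ : e ∈ lieTransporter L I) (z : L) : ⁅e, z⁆ ∈ lieTransporter L I := by
  have heI := hI.mem_of_mem_lieTransporter hgen he heJ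
  obtain ⟨f, hf, hne⟩ := hI.exists_mem_inf_lieTransporter_form_ne_zero hgen he heJ
  have hfez : ⁅f, ⁅e, z⁆⁆ ∈ I := by
    rw [← lie_skew]
    exact I.neg_mem (hf.2 _)
  -- In Premet's identity for `⁅e, ⁅f, ⁅e, z⁆⁆⁆` every term but `g_e(f) ⁅e, z⁆` is known to lie in
  -- the transporter.
  have hpremet := hI.lie_mem_lieTransporter heI hfez
  rwa [he.lie_lie_lie_eq, Submodule.sub_mem_iff_right, Submodule.smul_mem_iff _ hne] at hpremet
  exact Submodule.sub_mem _ (Submodule.smul_mem _ _ heJ)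
    (Submodule.smul_mem _ _ (hI.lie_mem_lieTransporter heI hf.1))

theorem exp_mem_lieTransporter (hI : IsInnerIdeal k I) (hy : IsExtremal k y)
    (he : IsExtremal k e) (heJ : e ∈ lieTransporter L I) :
    hy.exp e ∈ lieTransporter L I := by
  have hye : ⁅y, e⁆ ∈ lieTransporter L I := by
    rw [← lie_skew]
    exact Submodule.neg_mem _ (hI.lie_mem_lieTransporter_of_isExtremal hgen he heJ y)
  exact Submodule.add_mem _ (Submodule.add_mem _ heJ hye) (hI.form_smul_mem_lieTransporter heJ hy)

theorem lie_mem_span_isPureExtremal (hI : IsInnerIdeal k I) (hy : IsPureExtremal k y)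
    (hx : x ∈ Submodule.span k {e | IsPureExtremal k e ∧ e ∈ lieTransporter L I}) :
    ⁅y, x⁆ ∈ Submodule.span k {e | IsPureExtremal k e ∧ e ∈ lieTransporter L I} := by
  set A := Submodule.span k {e | IsPureExtremal k e ∧ e ∈ lieTransporter L I}
  suffices hA : A ≤ A.comap (LieAlgebra.ad k L y) from hA hx
  refine Submodule.span_le.2 fun e ⟨he, heJ⟩ => ?_
  have heA : e ∈ A := Submodule.subset_span ⟨he, heJ⟩
  have hexp : hy.1.exp e ∈ A :=
    Submodule.subset_span ⟨he.map hy.1.exp, hI.exp_mem_lieTransporter hgen hy.1 he.1 heJ⟩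
  have hform : hy.1.form e • y ∈ A := by
    by_cases h : hy.1.form e = 0
    · rw [h, zero_smul]
      exact A.zero_mem
    · exact A.smul_mem _
        (Submodule.subset_span ⟨hy, (hI.mem_inf_lieTransporter_of_form_ne_zero heJ hy.1 h).2⟩)
  rwa [hy.1.exp_apply, A.add_mem_iff_left hform, A.add_mem_iff_right heA] at hexp

theorem lieTransporter_eq_bot (hI : IsInnerIdeal k I) (hproper : I ≠ ⊤) :
    lieTransporter L I = ⊥ := by
  by_contra hJ
  obtain ⟨d, hd, hd0⟩ := Submodule.exists_mem_ne_zero_of_ne_bot hJ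
  obtain ⟨e, he, hne⟩ := exists_isPureExtremal_form_ne_zero hgen hd0
  have heJ : e ∈ lieTransporter L I := (hI.mem_inf_lieTransporter_of_form_ne_zero hd he.1 hne).2
  have hspan_le : Submodule.span k {e | IsPureExtremal k e ∧ e ∈ lieTransporter L I} ≤ I :=
    Submodule.span_le.2 fun f hf => hI.mem_of_mem_lieTransporter hgen hf.1.1 hf.2
  rcases eq_bot_or_eq_top_of_lieSpan_eq_top hgen
    fun y hy x hx => hI.lie_mem_span_isPureExtremal hgen hy hx with hbot | htop
  · exact he.1.1 (Submodule.span_eq_bot.1 hbot e ⟨he, heJ⟩)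
  · exact hproper (top_le_iff.1 (htop ▸ hspan_le))

theorem lie_eq_zero (hI : IsInnerIdeal k I) (hproper : I ≠ ⊤) (hx : x ∈ I) (hy : y ∈ I) :
    ⁅x, y⁆ = 0 := by
  rw [← Submodule.mem_bot k, ← hI.lieTransporter_eq_bot hgen hproper]
  exact hI.lie_mem_lieTransporter hx hy

end IsInnerIdeal

theorem stmt0_general {k L : Type*} [Field k] [LieRing L] [LieAlgebra k L]
    [LieAlgebra.IsSimple k L]
    (hchar : (2 : k) ≠ 0)
    (hgen : LieSubalgebra.lieSpan k L {x : L | IsPureExtremal k x} = ⊤)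
    (I : Submodule k L) (hI : IsInnerIdeal k I) (hproper : I ≠ ⊤) :
    (∀ x ∈ I, ∀ y ∈ I, ⁅x, y⁆ = (0 : L)) ∧
      ∀ x ∈ I, x ≠ 0 →
        (LieAlgebra.ad k L x) ^ 3 = 0 ∧ (LieAlgebra.ad k L x) ^ 2 ≠ 0 := by
  have : NeZero (2 : k) := ⟨hchar⟩
  refine ⟨fun x hx y hy => hI.lie_eq_zero hgen hproper hx hy,
    fun x hx hx0 => ⟨?_, fun hsq => hx0 ?_⟩⟩
  · ext z
    simpa [pow_succ] using hI.lie_eq_zero hgen hproper hx (hI x hx x hx z)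
  · have hsandwich : IsSandwich x := fun z => by simpa [pow_succ] using LinearMap.congr_fun hsq z
    exact hsandwich.eq_zero hgen

/-- Benkart's theorem: over a field of characteristic `≠ 2`, in a finite-dimensional
simple Lie algebra generated by its pure extremal elements, every proper inner ideal `I`
satisfies `⁅I, I⁆ = 0`, and every nonzero element of `I` is ad-nilpotent of index
exactly `3`. -/
theorem stmt0 {k L : Type*} [Field k] [LieRing L] [LieAlgebra k L]
    [FiniteDimensional k L] [LieAlgebra.IsSimple k L]
    (hchar : (2 : k) ≠ 0)
    (hgen : LieSubalgebra.lieSpan k L {x : L | IsPureExtremal k x} = ⊤)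
    (I : Submodule k L) (hI : IsInnerIdeal k I) (hproper : I ≠ ⊤) :
    (∀ x ∈ I, ∀ y ∈ I, ⁅x, y⁆ = (0 : L)) ∧
      ∀ x ∈ I, x ≠ 0 →
        (LieAlgebra.ad k L x) ^ 3 = 0 ∧ (LieAlgebra.ad k L x) ^ 2 ≠ 0 :=
  stmt0_general hchar hgen I hI hproper
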